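/- Integral commutator identity (key step of the magnetic virial identity): Let n ≥ 3, A ∈ C²(ℝⁿ; ℝⁿ), V ∈ C¹(ℝⁿ; ℝ), and let φ : ℝⁿ → ℝ be a C⁴ radial function. Define Hw = −∇_A·(∇_A w) + Vw and Tw = 2∇φ·∇_A w + (Δφ)w. Then for every u ∈ C_c^∞(ℝⁿ; ℂ): ∫ conj(u)·(H(Tu) − T(Hu)) dx = 4 ∫ Σ_{j,k} ∂_j∂_kφ · (∇_A u)_j · conj((∇_A u)_k) dx − ∫ |u|² Δ²φ dx − 2 ∫ |u|² ∇φ·∇V dx + 4 Im ∫ u · Σ_{j,k} ∂_jφ · B_{jk} · conj((∇_A u)_k) dx. -/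

import Mathlib

/-!
Write `D_k = ∂_k - i A_k` and `⟪v, w⟫ = ∫ conj v · w`. Each `D_k` is formally antisymmetric, hence
so is `T = Σ_k (∂_kφ D_k + D_k ∂_kφ)`, and `⟪v, H w⟫ = Σ_k ⟪D_k v, D_k w⟫ + ⟪v, V w⟫`. Therefore
`⟪u, [H, T] u⟫ = ⟪u, H T u⟫ + ⟪T u, H u⟫ = 2 Re ⟪u, H T u⟫
  = 2 Re Σ_k ⟪D_k u, D_k T u⟫ + 2 Re ⟪u, V T u⟫ = 2 Re Σ_k ⟪D_k u, [D_k, T] u⟫ + ⟪u, [V, T] u⟫`,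
because `Re ⟪D_k u, T D_k u⟫ = 0`. Now `[V, T] = -2 ∇φ·∇V`, and, since `[D_k, D_j] = i B_{kj}`,
`[D_k, T] = 2 Σ_j ∂_k∂_jφ D_j + 2i Σ_j ∂_jφ B_{kj} + ∂_kΔφ`.
The three parts yield the Hessian term, the field term and, through
`2 Re ⟪D_k u, f u⟫ = -⟪u, (∂_k f) u⟫` with `f = ∂_kΔφ`, the bilaplacian term.
-/

open MeasureTheory Complex
open scoped BigOperators

noncomputable section

/-- The magnetic (covariant) partial derivative `(∂ₖ - i Aₖ) w`. -/
noncomputable def magD {n : ℕ} (A : EuclideanSpace ℝ (Fin n) → EuclideanSpace ℝ (Fin n))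
    (k : Fin n) (w : EuclideanSpace ℝ (Fin n) → ℂ) (x : EuclideanSpace ℝ (Fin n)) : ℂ :=
  fderiv ℝ w x (EuclideanSpace.single k 1) - Complex.I * (A x k : ℂ) * w x

/-- The partial derivative `∂ₖ f` of a real-valued function. -/
noncomputable def pdR {n : ℕ} (f : EuclideanSpace ℝ (Fin n) → ℝ) (k : Fin n)
    (x : EuclideanSpace ℝ (Fin n)) : ℝ :=
  fderiv ℝ f x (EuclideanSpace.single k 1)

/-- The Laplacian `Δf = Σₖ ∂ₖ∂ₖ f` of a real-valued function. -/
noncomputable def lap {n : ℕ} (f : EuclideanSpace ℝ (Fin n) → ℝ)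
    (x : EuclideanSpace ℝ (Fin n)) : ℝ :=
  ∑ k, pdR (pdR f k) k x

/-- The magnetic Schrödinger operator `H w = -∇_A·(∇_A w) + V w`. -/
noncomputable def Hop {n : ℕ} (A : EuclideanSpace ℝ (Fin n) → EuclideanSpace ℝ (Fin n))
    (V : EuclideanSpace ℝ (Fin n) → ℝ) (w : EuclideanSpace ℝ (Fin n) → ℂ)
    (x : EuclideanSpace ℝ (Fin n)) : ℂ :=
  -∑ k, magD A k (magD A k w) x + (V x : ℂ) * w x

/-- The multiplier operator `T w = 2∇φ·∇_A w + (Δφ) w`. -/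
noncomputable def Tmul {n : ℕ} (A : EuclideanSpace ℝ (Fin n) → EuclideanSpace ℝ (Fin n))
    (φ : EuclideanSpace ℝ (Fin n) → ℝ) (w : EuclideanSpace ℝ (Fin n) → ℂ)
    (x : EuclideanSpace ℝ (Fin n)) : ℂ :=
  2 * ∑ k, (pdR φ k x : ℂ) * magD A k w x + (lap φ x : ℂ) * w x

/-- The matrix field `B_{jk} = ∂Aⱼ/∂xₖ - ∂Aₖ/∂xⱼ`. -/
noncomputable def Bfield {n : ℕ} (A : EuclideanSpace ℝ (Fin n) → EuclideanSpace ℝ (Fin n))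
    (j k : Fin n) (x : EuclideanSpace ℝ (Fin n)) : ℝ :=
  pdR (fun y => A y j) k x - pdR (fun y => A y k) j x

open scoped ComplexConjugate

section Calculus

variable {E F : Type*} [NormedAddCommGroup E] [NormedSpace ℝ E] [NormedAddCommGroup F]
  [NormedSpace ℝ F]

lemma fderiv_fderiv_apply_comm {f : E → F} (hf : ContDiff ℝ 2 f) (a b x : E) :
    fderiv ℝ (fun y => fderiv ℝ f y a) x b = fderiv ℝ (fun y => fderiv ℝ f y b) x a := by
  have hd : DifferentiableAt ℝ (fderiv ℝ f) x :=
    (hf.fderiv_right (m := 1) (by norm_num)).differentiable one_ne_zero x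
  have hsymm : IsSymmSndFDerivAt ℝ f x := hf.contDiffAt.isSymmSndFDerivAt (by simp)
  simpa [fderiv_clm_apply hd (differentiableAt_const _)] using hsymm b a

lemma hasFDerivAt_ofReal_comp {f : E → ℝ} {x : E} (hf : DifferentiableAt ℝ f x) :
    HasFDerivAt (fun y => (f y : ℂ)) (Complex.ofRealCLM.comp (fderiv ℝ f x)) x :=
  Complex.ofRealCLM.hasFDerivAt.comp x hf.hasFDerivAt

lemma differentiableAt_ofReal_mul {f : E → ℝ} {w : E → ℂ} {x : E} (hf : DifferentiableAt ℝ f x)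
    (hw : DifferentiableAt ℝ w x) : DifferentiableAt ℝ (fun y => (f y : ℂ) * w y) x :=
  (hasFDerivAt_ofReal_comp hf).differentiableAt.fun_mul hw

lemma contDiff_ofReal_comp {m : WithTop ℕ∞} {f : E → ℝ} (hf : ContDiff ℝ m f) :
    ContDiff ℝ m (fun x => (f x : ℂ)) :=
  Complex.ofRealCLM.contDiff.comp hf

lemma contDiff_ofReal_mul {m : WithTop ℕ∞} {f : E → ℝ} {w : E → ℂ} (hf : ContDiff ℝ m f)
    (hw : ContDiff ℝ m w) : ContDiff ℝ m (fun x => (f x : ℂ) * w x) :=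
  (contDiff_ofReal_comp hf).mul hw

lemma continuous_ofReal_mul {X : Type*} [TopologicalSpace X] {f : X → ℝ} {w : X → ℂ}
    (hf : Continuous f) (hw : Continuous w) : Continuous fun x => (f x : ℂ) * w x :=
  (continuous_ofReal.comp hf).mul hw

end Calculus

/-- The sesquilinear `L²` pairing `∫ conj v · w`, taken on functions rather than on classes in
`Lp`, so that differential operators can be applied to its arguments. As a Bochner integral it
is `0` when the product is not integrable. -/
def l2Pairing {X : Type*} [MeasureSpace X] (v w : X → ℂ) : ℂ :=
  ∫ x, conj (v x) * w x

local notation "⟪" v ", " w "⟫" => l2Pairing v w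

section Pairing

section MeasureSpace

variable {X : Type*} [MeasureSpace X]

lemma conj_l2Pairing (v w : X → ℂ) : conj ⟪v, w⟫ = ⟪w, v⟫ := by
  simp only [l2Pairing, ← integral_conj, map_mul, Complex.conj_conj, mul_comm]

lemma l2Pairing_const_mul_right (v w : X → ℂ) (c : ℂ) : ⟪v, fun x => c * w x⟫ = c * ⟪v, w⟫ := by
  simp only [l2Pairing, mul_left_comm, integral_const_mul]

lemma l2Pairing_ofReal_mul_left (f : X → ℝ) (v w : X → ℂ) :
    ⟪fun x => (f x : ℂ) * v x, w⟫ = ⟪v, fun x => (f x : ℂ) * w x⟫ := by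
  simp only [l2Pairing, map_mul, Complex.conj_ofReal, mul_left_comm, mul_assoc]

lemma l2Pairing_ofReal_mul_self (f : X → ℝ) (v : X → ℂ) :
    ⟪v, fun x => (f x : ℂ) * v x⟫ = ((∫ x, ‖v x‖ ^ 2 * f x : ℝ) : ℂ) := by
  rw [← integral_complex_ofReal, l2Pairing]
  congr with x
  push_cast
  rw [← Complex.conj_mul', mul_left_comm, mul_comm]

end MeasureSpace

variable {X : Type*} [TopologicalSpace X] [MeasureSpace X] [OpensMeasurableSpace X]
  [IsFiniteMeasureOnCompacts (volume : Measure X)] {v v₁ v₂ w w₁ w₂ : X → ℂ}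

lemma integrable_conj_mul (hv : Continuous v) (hcv : HasCompactSupport v) (hw : Continuous w) :
    Integrable (fun x => conj (v x) * w x) :=
  ((Complex.continuous_conj.comp hv).mul hw).integrable_of_hasCompactSupport
    (hcv.comp_left (g := conj) (map_zero _)).mul_right

lemma l2Pairing_add_left (hv₁ : Continuous v₁) (hcv₁ : HasCompactSupport v₁) (hv₂ : Continuous v₂)
    (hcv₂ : HasCompactSupport v₂) (hw : Continuous w) :
    ⟪fun x => v₁ x + v₂ x, w⟫ = ⟪v₁, w⟫ + ⟪v₂, w⟫ := by
  simp only [l2Pairing, map_add, add_mul]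
  exact integral_add (integrable_conj_mul hv₁ hcv₁ hw) (integrable_conj_mul hv₂ hcv₂ hw)

lemma l2Pairing_sub_left (hv₁ : Continuous v₁) (hcv₁ : HasCompactSupport v₁) (hv₂ : Continuous v₂)
    (hcv₂ : HasCompactSupport v₂) (hw : Continuous w) :
    ⟪fun x => v₁ x - v₂ x, w⟫ = ⟪v₁, w⟫ - ⟪v₂, w⟫ := by
  simp only [l2Pairing, map_sub, sub_mul]
  exact integral_sub (integrable_conj_mul hv₁ hcv₁ hw) (integrable_conj_mul hv₂ hcv₂ hw)

lemma l2Pairing_add_right (hv : Continuous v) (hcv : HasCompactSupport v) (hw₁ : Continuous w₁)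
    (hw₂ : Continuous w₂) : ⟪v, fun x => w₁ x + w₂ x⟫ = ⟪v, w₁⟫ + ⟪v, w₂⟫ := by
  simp only [l2Pairing, mul_add]
  exact integral_add (integrable_conj_mul hv hcv hw₁) (integrable_conj_mul hv hcv hw₂)

lemma l2Pairing_sub_right (hv : Continuous v) (hcv : HasCompactSupport v) (hw₁ : Continuous w₁)
    (hw₂ : Continuous w₂) : ⟪v, fun x => w₁ x - w₂ x⟫ = ⟪v, w₁⟫ - ⟪v, w₂⟫ := by
  simp only [l2Pairing, mul_sub]
  exact integral_sub (integrable_conj_mul hv hcv hw₁) (integrable_conj_mul hv hcv hw₂)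

lemma sum_l2Pairing {ι : Type*} {s : Finset ι} {v w : ι → X → ℂ} (hv : ∀ k ∈ s, Continuous (v k))
    (hcv : ∀ k ∈ s, HasCompactSupport (v k)) (hw : ∀ k ∈ s, Continuous (w k)) :
    ∑ k ∈ s, ⟪v k, w k⟫ = ∫ x, ∑ k ∈ s, conj (v k x) * w k x :=
  (integral_finsetSum s fun k hk => integrable_conj_mul (hv k hk) (hcv k hk) (hw k hk)).symm

lemma l2Pairing_sum_right {ι : Type*} {s : Finset ι} {w : ι → X → ℂ} (hv : Continuous v)
    (hcv : HasCompactSupport v) (hw : ∀ k ∈ s, Continuous (w k)) :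
    ⟪v, fun x => ∑ k ∈ s, w k x⟫ = ∑ k ∈ s, ⟪v, w k⟫ := by
  rw [sum_l2Pairing (fun _ _ => hv) (fun _ _ => hcv) hw]
  simp only [l2Pairing, Finset.mul_sum]

lemma l2Pairing_sum_left {ι : Type*} {s : Finset ι} {v : ι → X → ℂ} (hv : ∀ k ∈ s, Continuous (v k))
    (hcv : ∀ k ∈ s, HasCompactSupport (v k)) (hw : Continuous w) :
    ⟪fun x => ∑ k ∈ s, v k x, w⟫ = ∑ k ∈ s, ⟪v k, w⟫ := by
  rw [sum_l2Pairing hv hcv fun _ _ => hw]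
  simp only [l2Pairing, map_sum, Finset.sum_mul]

lemma l2Pairing_fderiv_right {E : Type*} [NormedAddCommGroup E] [NormedSpace ℝ E]
    [FiniteDimensional ℝ E] [MeasureSpace E] [BorelSpace E]
    [(volume : Measure E).IsAddHaarMeasure] {v w : E → ℂ} (hv : ContDiff ℝ 1 v)
    (hcv : HasCompactSupport v) (hw : ContDiff ℝ 1 w) (e : E) :
    ⟪v, fun x => fderiv ℝ w x e⟫ = -⟪fun x => fderiv ℝ v x e, w⟫ := by
  have hv' : Continuous fun x => fderiv ℝ v x e :=
    (hv.continuous_fderiv one_ne_zero).clm_apply continuous_const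
  have hw' : Continuous fun x => fderiv ℝ w x e :=
    (hw.continuous_fderiv one_ne_zero).clm_apply continuous_const
  exact integral_bilinear_fderiv_right_eq_neg_left_of_integrable
    (B := (ContinuousLinearMap.mul ℝ ℂ).comp (Complex.conjCLE : ℂ →L[ℝ] ℂ))
    (integrable_conj_mul hv' (hcv.fderiv_apply ℝ e) hw.continuous)
    (integrable_conj_mul hv.continuous hcv hw')
    (integrable_conj_mul hv.continuous hcv hw.continuous)
    (fun x _ => hv.differentiable one_ne_zero x) (fun x _ => hw.differentiable one_ne_zero x)

end Pairing

section Virial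

variable {n : ℕ}

local notation:max "ℝ^" n:max => EuclideanSpace ℝ (Fin n)

variable {m p q : WithTop ℕ∞} {A : ℝ^n → ℝ^n} {V φ f : ℝ^n → ℝ} {u v w : ℝ^n → ℂ} {x : ℝ^n}

lemma contDiff_pdR (hf : ContDiff ℝ p f) (h : m + 1 ≤ p) (k : Fin n) : ContDiff ℝ m (pdR f k) :=
  (hf.fderiv_right h).clm_apply contDiff_const

lemma continuous_pdR (hf : ContDiff ℝ 1 f) (k : Fin n) : Continuous (pdR f k) :=
  (contDiff_pdR hf (zero_add 1).le k).continuous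

lemma contDiff_lap (hf : ContDiff ℝ p f) (h : m + 1 + 1 ≤ p) : ContDiff ℝ m (lap f) :=
  ContDiff.sum fun k _ => contDiff_pdR (contDiff_pdR hf h k) le_rfl k

lemma contDiff_magD (hA : ContDiff ℝ m A) (hw : ContDiff ℝ p w) (h : m + 1 ≤ p) (k : Fin n) :
    ContDiff ℝ m (magD A k w) :=
  ((hw.fderiv_right h).clm_apply contDiff_const).sub
    ((contDiff_const.mul (contDiff_ofReal_comp (contDiff_euclidean.1 hA k))).mul
      (hw.of_le (le_self_add.trans h)))

lemma contDiff_Tmul (hA : ContDiff ℝ m A) (hφ : ContDiff ℝ p φ) (hp : m + 1 + 1 ≤ p)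
    (hw : ContDiff ℝ q w) (hq : m + 1 ≤ q) : ContDiff ℝ m (Tmul A φ w) :=
  (contDiff_const.mul (ContDiff.sum fun k _ =>
    (contDiff_ofReal_comp (contDiff_pdR hφ (le_self_add.trans hp) k)).mul
      (contDiff_magD hA hw hq k))).add
    ((contDiff_ofReal_comp (contDiff_lap hφ hp)).mul (hw.of_le (le_self_add.trans hq)))

lemma contDiff_Hop (hA : ContDiff ℝ p A) (hp : m + 1 ≤ p) (hV : ContDiff ℝ m V)
    (hw : ContDiff ℝ q w) (hq : m + 1 + 1 ≤ q) : ContDiff ℝ m (Hop A V w) :=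
  (ContDiff.sum fun k _ => contDiff_magD (hA.of_le (le_self_add.trans hp))
    (contDiff_magD (hA.of_le hp) hw hq k) le_rfl k).neg.add
    ((contDiff_ofReal_comp hV).mul (hw.of_le (le_self_add.trans (le_self_add.trans hq))))

lemma continuous_magD (hA : Continuous A) (hw : ContDiff ℝ 1 w) (k : Fin n) :
    Continuous (magD A k w) :=
  (contDiff_magD (contDiff_zero.2 hA) hw (zero_add 1).le k).continuous

lemma continuous_Tmul (hA : Continuous A) (hφ : ContDiff ℝ 2 φ) (hw : ContDiff ℝ 1 w) :
    Continuous (Tmul A φ w) :=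
  (contDiff_Tmul (contDiff_zero.2 hA) hφ (by norm_num) hw (zero_add 1).le).continuous

lemma magD_of_notMem_tsupport (hx : x ∉ tsupport w) (k : Fin n) : magD A k w x = 0 := by
  simp [magD, fderiv_of_notMem_tsupport ℝ hx, image_eq_zero_of_notMem_tsupport hx]

lemma hasCompactSupport_magD (hcw : HasCompactSupport w) (k : Fin n) :
    HasCompactSupport (magD A k w) :=
  .intro hcw fun _ hx => magD_of_notMem_tsupport hx k

lemma hasCompactSupport_Tmul (hcw : HasCompactSupport w) : HasCompactSupport (Tmul A φ w) :=
  .intro hcw fun _ hx => by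
    simp [Tmul, magD_of_notMem_tsupport hx, image_eq_zero_of_notMem_tsupport hx]

lemma pdR_comm (hf : ContDiff ℝ 2 f) (j k : Fin n) (x : ℝ^n) :
    pdR (pdR f k) j x = pdR (pdR f j) k x :=
  fderiv_fderiv_apply_comm hf _ _ x

lemma Bfield_antisymm (A : ℝ^n → ℝ^n) (j k : Fin n) (x : ℝ^n) : Bfield A j k x = -Bfield A k j x :=
  (neg_sub _ _).symm

lemma magD_add (hv : DifferentiableAt ℝ v x) (hw : DifferentiableAt ℝ w x) (k : Fin n) :
    magD A k (fun y => v y + w y) x = magD A k v x + magD A k w x := by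
  simp only [magD, fderiv_fun_add hv hw, add_apply]
  ring

lemma magD_const_mul (hw : DifferentiableAt ℝ w x) (c : ℂ) (k : Fin n) :
    magD A k (fun y => c * w y) x = c * magD A k w x := by
  simp only [magD, fderiv_const_mul hw, smul_apply, smul_eq_mul]
  ring

lemma magD_sum {ι : Type*} {s : Finset ι} {w : ι → ℝ^n → ℂ}
    (hw : ∀ j ∈ s, DifferentiableAt ℝ (w j) x) (k : Fin n) :
    magD A k (fun y => ∑ j ∈ s, w j y) x = ∑ j ∈ s, magD A k (w j) x := by
  simp [magD, fderiv_fun_sum hw, Finset.mul_sum]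

lemma magD_ofReal_mul (hf : DifferentiableAt ℝ f x) (hw : DifferentiableAt ℝ w x) (k : Fin n) :
    magD A k (fun y => (f y : ℂ) * w y) x = pdR f k x * w x + f x * magD A k w x := by
  rw [magD, ((hasFDerivAt_ofReal_comp hf).fun_mul hw.hasFDerivAt).fderiv]
  simp [magD, pdR]
  ring

lemma magD_magD (hA : ContDiff ℝ 1 A) (hw : ContDiff ℝ 2 w) (j k : Fin n) (x : ℝ^n) :
    magD A j (magD A k w) x
      = fderiv ℝ (fun y => fderiv ℝ w y (EuclideanSpace.single k 1)) x (EuclideanSpace.single j 1)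
        - I * (A x j * fderiv ℝ w x (EuclideanSpace.single k 1)
          + A x k * fderiv ℝ w x (EuclideanSpace.single j 1))
        - (I * pdR (fun y => A y k) j x + A x j * A x k) * w x := by
  have hAk : DifferentiableAt ℝ (fun y => A y k) x :=
    (contDiff_euclidean.1 hA k).differentiable one_ne_zero x
  have hw₁ : DifferentiableAt ℝ w x := hw.differentiable two_ne_zero x
  have hdw : DifferentiableAt ℝ (fun y => fderiv ℝ w y (EuclideanSpace.single k 1)) x :=
    ((hw.fderiv_right (m := 1) (by norm_num)).clm_apply contDiff_const).differentiable
      one_ne_zero x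
  have hexpand : magD A k w = fun y => fderiv ℝ w y (EuclideanSpace.single k 1)
      + -I * ((A y k : ℂ) * w y) := by
    funext y; simp only [magD]; ring
  have hAw : DifferentiableAt ℝ (fun y => (A y k : ℂ) * w y) x :=
    differentiableAt_ofReal_mul hAk hw₁
  rw [hexpand, magD_add hdw (hAw.const_mul _), magD_const_mul hAw, magD_ofReal_mul hAk hw₁]
  simp only [magD]
  linear_combination A x j * A x k * w x * I_sq

lemma magD_comm (hA : ContDiff ℝ 1 A) (hw : ContDiff ℝ 2 w) (j k : Fin n) (x : ℝ^n) :
    magD A j (magD A k w) x = magD A k (magD A j w) x + I * Bfield A j k x * w x := by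
  rw [magD_magD hA hw j k, magD_magD hA hw k j, fderiv_fderiv_apply_comm hw, Bfield]
  push_cast
  ring

lemma magD_Tmul (hA : ContDiff ℝ 1 A) (hφ : ContDiff ℝ 3 φ) (hw : ContDiff ℝ 2 w) (k : Fin n)
    (x : ℝ^n) :
    magD A k (Tmul A φ w) x
      = Tmul A φ (magD A k w) x
        + (2 * ∑ j, pdR (pdR φ j) k x * magD A j w x
          + 2 * I * (∑ j, (pdR φ j x : ℂ) * Bfield A k j x) * w x + pdR (lap φ) k x * w x) := by
  have hp j : DifferentiableAt ℝ (pdR φ j) x :=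
    (contDiff_pdR (m := 2) hφ (by norm_num) j).differentiable two_ne_zero x
  have hl : DifferentiableAt ℝ (lap φ) x :=
    (contDiff_lap (m := 1) hφ (by norm_num)).differentiable one_ne_zero x
  have hw₁ : DifferentiableAt ℝ w x := hw.differentiable two_ne_zero x
  have hD j : DifferentiableAt ℝ (magD A j w) x :=
    (contDiff_magD hA hw (by norm_num) j).differentiable one_ne_zero x
  have hpD j : DifferentiableAt ℝ (fun y => (pdR φ j y : ℂ) * magD A j w y) x :=
    differentiableAt_ofReal_mul (hp j) (hD j)
  have hsum : DifferentiableAt ℝ (fun y => ∑ j, (pdR φ j y : ℂ) * magD A j w y) x :=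
    .fun_sum fun j _ => hpD j
  have hleibniz j : magD A k (fun y => (pdR φ j y : ℂ) * magD A j w y) x
      = pdR φ j x * magD A j (magD A k w) x + pdR (pdR φ j) k x * magD A j w x
        + I * (pdR φ j x * Bfield A k j x * w x) := by
    rw [magD_ofReal_mul (hp j) (hD j), magD_comm hA hw k j]
    ring
  unfold Tmul
  rw [magD_add (hsum.const_mul 2) (differentiableAt_ofReal_mul hl hw₁),
    magD_const_mul hsum, magD_sum fun j _ => hpD j, magD_ofReal_mul hl hw₁]
  simp only [hleibniz, Finset.sum_add_distrib, ← Finset.mul_sum, ← Finset.sum_mul]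
  ring

lemma Tmul_ofReal_mul (hV : DifferentiableAt ℝ V x) (hw : DifferentiableAt ℝ w x) :
    Tmul A φ (fun y => (V y : ℂ) * w y) x
      = V x * Tmul A φ w x + 2 * (((∑ k, pdR φ k x * pdR V k x : ℝ) : ℂ) * w x) := by
  have hsum : ∑ k, pdR φ k x * magD A k (fun y => (V y : ℂ) * w y) x
      = ((∑ k, pdR φ k x * pdR V k x : ℝ) : ℂ) * w x + V x * ∑ k, pdR φ k x * magD A k w x := by
    push_cast
    rw [Finset.sum_mul, Finset.mul_sum, ← Finset.sum_add_distrib]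
    exact Finset.sum_congr rfl fun k _ => by rw [magD_ofReal_mul hV hw]; ring
  rw [Tmul, Tmul, hsum]
  ring

lemma Tmul_eq_sum (hφ : ContDiff ℝ 2 φ) (hw : Differentiable ℝ w) :
    Tmul A φ w = fun x =>
      ∑ k, (pdR φ k x * magD A k w x + magD A k (fun y => (pdR φ k y : ℂ) * w y) x) := by
  funext x
  have hp k : DifferentiableAt ℝ (pdR φ k) x :=
    (contDiff_pdR (m := 1) hφ (by norm_num) k).differentiable one_ne_zero x
  simp only [Tmul, lap, fun k => magD_ofReal_mul (A := A) (hp k) (hw x) k, Finset.sum_add_distrib,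
    Complex.ofReal_sum, Finset.sum_mul]
  ring

lemma l2Pairing_magD_right (hA : Continuous A) (hv : ContDiff ℝ 1 v) (hcv : HasCompactSupport v)
    (hw : ContDiff ℝ 1 w) (k : Fin n) : ⟪v, magD A k w⟫ = -⟪magD A k v, w⟫ := by
  set e : ℝ^n := EuclideanSpace.single k 1
  have hdv : Continuous fun x => fderiv ℝ v x e :=
    (hv.continuous_fderiv one_ne_zero).clm_apply continuous_const
  have hdw : Continuous fun x => fderiv ℝ w x e :=
    (hw.continuous_fderiv one_ne_zero).clm_apply continuous_const
  have hv₀ : Continuous v := hv.continuous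
  have hw₀ : Continuous w := hw.continuous
  have hAv : Continuous fun x => I * (A x k : ℂ) * v x := by fun_prop
  have hAw : Continuous fun x => I * (A x k : ℂ) * w x := by fun_prop
  have hcAv : HasCompactSupport fun x => I * (A x k : ℂ) * v x := hcv.mul_left
  have hpotential : ⟪v, fun x => I * A x k * w x⟫ = -⟪fun x => I * A x k * v x, w⟫ := by
    simp only [l2Pairing, ← integral_neg, map_mul, conj_I, conj_ofReal]
    congr with x
    ring
  unfold magD
  rw [l2Pairing_sub_right hv₀ hcv hdw hAw,
    l2Pairing_sub_left hdv (hcv.fderiv_apply ℝ e) hAv hcAv hw₀,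
    l2Pairing_fderiv_right hv hcv hw, hpotential]
  ring

lemma l2Pairing_Tmul_right (hA : Continuous A) (hφ : ContDiff ℝ 2 φ) (hv : ContDiff ℝ 1 v)
    (hcv : HasCompactSupport v) (hw : ContDiff ℝ 1 w) : ⟪v, Tmul A φ w⟫ = -⟪Tmul A φ v, w⟫ := by
  have hp k : ContDiff ℝ 1 (pdR φ k) := contDiff_pdR hφ (by norm_num) k
  have hpD {g : ℝ^n → ℂ} (hg : ContDiff ℝ 1 g) k :
      Continuous fun x => (pdR φ k x : ℂ) * magD A k g x :=
    continuous_ofReal_mul (hp k).continuous (continuous_magD hA hg k)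
  have hpg {g : ℝ^n → ℂ} (hg : ContDiff ℝ 1 g) k : ContDiff ℝ 1 fun x => (pdR φ k x : ℂ) * g x :=
    contDiff_ofReal_mul (hp k) hg
  have hDp {g : ℝ^n → ℂ} (hg : ContDiff ℝ 1 g) k :
      Continuous (magD A k fun x => (pdR φ k x : ℂ) * g x) :=
    continuous_magD hA (hpg hg k) k
  have hcpv k : HasCompactSupport fun x => (pdR φ k x : ℂ) * v x := hcv.mul_left
  have hcpD k : HasCompactSupport fun x => (pdR φ k x : ℂ) * magD A k v x :=
    (hasCompactSupport_magD hcv k).mul_left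
  have hcDp k := hasCompactSupport_magD (A := A) (hcpv k) k
  have hterm k : ⟪v, fun x => pdR φ k x * magD A k w x + magD A k (fun y => pdR φ k y * w y) x⟫
      = -⟪fun x => pdR φ k x * magD A k v x + magD A k (fun y => pdR φ k y * v y) x, w⟫ := by
    rw [l2Pairing_add_right hv.continuous hcv (hpD hw k) (hDp hw k),
      l2Pairing_add_left (hpD hv k) (hcpD k) (hDp hv k) (hcDp k) hw.continuous,
      ← l2Pairing_ofReal_mul_left, l2Pairing_magD_right hA (hpg hv k) (hcpv k) hw,
      l2Pairing_magD_right hA hv hcv (hpg hw k), ← l2Pairing_ofReal_mul_left]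
    ring
  rw [Tmul_eq_sum hφ (hw.differentiable one_ne_zero),
    Tmul_eq_sum hφ (hv.differentiable one_ne_zero),
    l2Pairing_sum_right hv.continuous hcv fun k _ => (hpD hw k).fun_add (hDp hw k),
    l2Pairing_sum_left (fun k _ => (hpD hv k).fun_add (hDp hv k))
      (fun k _ => (hcpD k).add (hcDp k)) hw.continuous, ← Finset.sum_neg_distrib]
  exact Finset.sum_congr rfl fun k _ => hterm k

lemma l2Pairing_Tmul_self_add_conj (hA : Continuous A) (hφ : ContDiff ℝ 2 φ) (hv : ContDiff ℝ 1 v)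
    (hcv : HasCompactSupport v) : ⟪v, Tmul A φ v⟫ + conj ⟪v, Tmul A φ v⟫ = 0 := by
  rw [conj_l2Pairing, l2Pairing_Tmul_right hA hφ hv hcv hv, neg_add_cancel]

lemma l2Pairing_Hop_right (hA : ContDiff ℝ 1 A) (hV : Continuous V) (hv : ContDiff ℝ 1 v)
    (hcv : HasCompactSupport v) (hw : ContDiff ℝ 2 w) :
    ⟪v, Hop A V w⟫ = ∑ k, ⟪magD A k v, magD A k w⟫ + ⟪v, fun x => V x * w x⟫ := by
  have hD k : ContDiff ℝ 1 (magD A k w) := contDiff_magD hA hw (by norm_num) k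
  have hDD k : Continuous (magD A k (magD A k w)) := continuous_magD hA.continuous (hD k) k
  have hsum : Hop A V w = fun x => (V x : ℂ) * w x - ∑ k, magD A k (magD A k w) x := by
    funext x; rw [Hop, neg_add_eq_sub]
  rw [hsum, l2Pairing_sub_right hv.continuous hcv
      (continuous_ofReal_mul hV hw.continuous) (continuous_finsetSum _ fun k _ => hDD k),
    l2Pairing_sum_right hv.continuous hcv fun k _ => hDD k,
    Finset.sum_congr rfl fun k _ => l2Pairing_magD_right hA.continuous hv hcv (hD k) k,
    Finset.sum_neg_distrib, sub_neg_eq_add, add_comm]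

lemma l2Pairing_magD_ofReal_mul_add_conj (hA : Continuous A) (hf : ContDiff ℝ 1 f)
    (hu : ContDiff ℝ 1 u) (hcu : HasCompactSupport u) (k : Fin n) :
    ⟪magD A k u, fun x => f x * u x⟫ + conj ⟪magD A k u, fun x => f x * u x⟫
      = -⟪u, fun x => pdR f k x * u x⟫ := by
  have hleibniz : magD A k (fun y => (f y : ℂ) * u y)
      = fun x => pdR f k x * u x + f x * magD A k u x :=
    funext fun x =>
      magD_ofReal_mul (hf.differentiable one_ne_zero x) (hu.differentiable one_ne_zero x) k
  have hdf : Continuous (pdR f k) := continuous_pdR hf k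
  have hibp : ⟪u, fun x => pdR f k x * u x⟫ + ⟪u, fun x => f x * magD A k u x⟫
      = -⟪magD A k u, fun x => f x * u x⟫ := by
    rw [← l2Pairing_magD_right hA hu hcu (contDiff_ofReal_mul hf hu), hleibniz,
      l2Pairing_add_right hu.continuous hcu (continuous_ofReal_mul hdf hu.continuous)
        (continuous_ofReal_mul hf.continuous (continuous_magD hA hu k))]
  rw [conj_l2Pairing, l2Pairing_ofReal_mul_left]
  linear_combination hibp

lemma l2Pairing_mul_Tmul_add_conj (hA : Continuous A) (hφ : ContDiff ℝ 2 φ) (hV : ContDiff ℝ 1 V)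
    (hu : ContDiff ℝ 1 u) (hcu : HasCompactSupport u) :
    ⟪u, fun x => V x * Tmul A φ u x⟫ + conj ⟪u, fun x => V x * Tmul A φ u x⟫
      = -2 * ((∫ x, ‖u x‖ ^ 2 * ∑ k, pdR φ k x * pdR V k x : ℝ) : ℂ) := by
  have hVT : Continuous fun x => (V x : ℂ) * Tmul A φ u x :=
    continuous_ofReal_mul hV.continuous (continuous_Tmul hA hφ hu)
  have hgrad : Continuous fun x => ∑ k, pdR φ k x * pdR V k x :=
    continuous_finsetSum _ fun k _ =>
      (continuous_pdR (hφ.of_le one_le_two) k).mul (continuous_pdR hV k)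
  have hgradu : Continuous fun x => 2 * (((∑ k, pdR φ k x * pdR V k x : ℝ) : ℂ) * u x) :=
    continuous_const.mul (continuous_ofReal_mul hgrad hu.continuous)
  have hleibniz : Tmul A φ (fun y => (V y : ℂ) * u y) = fun x =>
      V x * Tmul A φ u x + 2 * (((∑ k, pdR φ k x * pdR V k x : ℝ) : ℂ) * u x) :=
    funext fun x =>
      Tmul_ofReal_mul (hV.differentiable one_ne_zero x) (hu.differentiable one_ne_zero x)
  have hibp : ⟪u, fun x => V x * Tmul A φ u x⟫
      + 2 * ((∫ x, ‖u x‖ ^ 2 * ∑ k, pdR φ k x * pdR V k x : ℝ) : ℂ)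
        = -⟪Tmul A φ u, fun x => V x * u x⟫ := by
    rw [← l2Pairing_Tmul_right hA hφ hu hcu (contDiff_ofReal_mul hV hu), hleibniz,
      l2Pairing_add_right hu.continuous hcu hVT hgradu, l2Pairing_const_mul_right,
      l2Pairing_ofReal_mul_self]
  rw [conj_l2Pairing, l2Pairing_ofReal_mul_left]
  linear_combination hibp

lemma l2Pairing_Hop_comm (hA : ContDiff ℝ 1 A) (hV : Continuous V) (hv : ContDiff ℝ 2 v)
    (hcv : HasCompactSupport v) (hw : ContDiff ℝ 2 w) (hcw : HasCompactSupport w) :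
    ⟪v, Hop A V w⟫ = ⟪Hop A V v, w⟫ := by
  rw [← conj_l2Pairing w, l2Pairing_Hop_right hA hV (hv.of_le one_le_two) hcv hw,
    l2Pairing_Hop_right hA hV (hw.of_le one_le_two) hcw hv, map_add, map_sum]
  simp only [conj_l2Pairing, l2Pairing_ofReal_mul_left]

lemma l2Pairing_Hop_commutator_self (hA : ContDiff ℝ 2 A) (hV : ContDiff ℝ 1 V)
    (hφ : ContDiff ℝ 4 φ) (hu : ContDiff ℝ 3 u) (hcu : HasCompactSupport u) :
    ⟪u, fun x => Hop A V (Tmul A φ u) x - Tmul A φ (Hop A V u) x⟫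
      = ⟪u, Hop A V (Tmul A φ u)⟫ + conj ⟪u, Hop A V (Tmul A φ u)⟫ := by
  have hA₁ : ContDiff ℝ 1 A := hA.of_le one_le_two
  have hφ₂ : ContDiff ℝ 2 φ := hφ.of_le (by norm_num)
  have hu₂ : ContDiff ℝ 2 u := hu.of_le (by norm_num)
  have hT : ContDiff ℝ 2 (Tmul A φ u) := contDiff_Tmul hA hφ (by norm_num) hu (by norm_num)
  have hH : ContDiff ℝ 1 (Hop A V u) := contDiff_Hop hA (by norm_num) hV hu (by norm_num)
  have hHT : Continuous (Hop A V (Tmul A φ u)) :=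
    (contDiff_Hop (m := 0) hA₁ (by norm_num) (hV.of_le zero_le_one) hT (by norm_num)).continuous
  have hTH : Continuous (Tmul A φ (Hop A V u)) := continuous_Tmul hA.continuous hφ₂ hH
  rw [l2Pairing_sub_right hu.continuous hcu hHT hTH,
    l2Pairing_Tmul_right hA.continuous hφ₂ (hu.of_le (by norm_num)) hcu hH, sub_neg_eq_add,
    conj_l2Pairing, l2Pairing_Hop_comm hA₁ hV.continuous hT (hasCompactSupport_Tmul hcu) hu₂ hcu]

/-- The quadratic form `D²φ(∇_A u, ∇_A u)` of the Hessian of `φ`, conjugate-linear in the second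
slot: the leading term of the identity. -/
def hessianForm (A : ℝ^n → ℝ^n) (φ : ℝ^n → ℝ) (u : ℝ^n → ℂ) (x : ℝ^n) : ℂ :=
  ∑ j, ∑ k, (pdR (pdR φ k) j x : ℂ) * magD A j u x * conj (magD A k u x)

/-- The magnetic term `u ∇φ·B·conj(∇_A u)`, through which the failure of the `magD A k` to commute
enters the identity. -/
def fieldForm (A : ℝ^n → ℝ^n) (φ : ℝ^n → ℝ) (u : ℝ^n → ℂ) (x : ℝ^n) : ℂ :=
  u x * ∑ j, ∑ k, (pdR φ j x : ℂ) * (Bfield A j k x : ℂ) * conj (magD A k u x)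

lemma conj_hessianForm (hφ : ContDiff ℝ 2 φ) (u : ℝ^n → ℂ) (x : ℝ^n) :
    conj (hessianForm A φ u x) = hessianForm A φ u x := by
  simp only [hessianForm, map_sum, map_mul, conj_ofReal, Complex.conj_conj]
  rw [Finset.sum_comm]
  refine Finset.sum_congr rfl fun j _ => Finset.sum_congr rfl fun k _ => ?_
  rw [pdR_comm hφ k j]
  ring

lemma sum_conj_magD_mul_commutator (hA : ContDiff ℝ 1 A) (hφ : ContDiff ℝ 3 φ)
    (hu : ContDiff ℝ 2 u) (x : ℝ^n) :
    ∑ k, conj (magD A k u x) * (magD A k (Tmul A φ u) x - Tmul A φ (magD A k u) x)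
      = 2 * hessianForm A φ u x - 2 * I * fieldForm A φ u x
        + ∑ k, conj (magD A k u x) * (pdR (lap φ) k x * u x) := by
  have hhessian : ∑ k, conj (magD A k u x) * ∑ j, pdR (pdR φ j) k x * magD A j u x
      = hessianForm A φ u x := by
    rw [hessianForm, Finset.sum_comm]
    refine Finset.sum_congr rfl fun k _ => ?_
    rw [Finset.mul_sum]
    exact Finset.sum_congr rfl fun j _ => by
      rw [pdR_comm (hφ.of_le (by norm_num)) k j]; ring
  have hfield : ∑ k, conj (magD A k u x) * ((∑ j, (pdR φ j x : ℂ) * Bfield A k j x) * u x)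
      = -fieldForm A φ u x := by
    rw [fieldForm, Finset.sum_comm, Finset.mul_sum, ← Finset.sum_neg_distrib]
    refine Finset.sum_congr rfl fun k _ => ?_
    rw [Finset.sum_mul, Finset.mul_sum, Finset.mul_sum, ← Finset.sum_neg_distrib]
    exact Finset.sum_congr rfl fun j _ => by
      rw [Bfield_antisymm A k j]; push_cast; ring
  have hterm k : conj (magD A k u x) * (magD A k (Tmul A φ u) x - Tmul A φ (magD A k u) x)
      = 2 * (conj (magD A k u x) * ∑ j, pdR (pdR φ j) k x * magD A j u x)
        + 2 * I * (conj (magD A k u x) * ((∑ j, (pdR φ j x : ℂ) * Bfield A k j x) * u x))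
        + conj (magD A k u x) * (pdR (lap φ) k x * u x) := by
    rw [magD_Tmul hA hφ hu]
    ring
  simp only [hterm, Finset.sum_add_distrib, ← Finset.mul_sum, hhessian, hfield]
  ring

lemma integrable_hessianForm (hA : Continuous A) (hφ : ContDiff ℝ 2 φ) (hu : ContDiff ℝ 1 u)
    (hcu : HasCompactSupport u) : Integrable (hessianForm A φ u) := by
  have hH j k : Continuous (pdR (pdR φ k) j) :=
    continuous_pdR (contDiff_pdR hφ (by norm_num) k) j
  have hD k : Continuous (magD A k u) := continuous_magD hA hu k
  refine Continuous.integrable_of_hasCompactSupport ?_ (.intro hcu fun x hx => ?_)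
  · unfold hessianForm
    fun_prop
  · simp [hessianForm, magD_of_notMem_tsupport hx]

lemma integrable_fieldForm (hA : ContDiff ℝ 1 A) (hφ : ContDiff ℝ 1 φ) (hu : ContDiff ℝ 1 u)
    (hcu : HasCompactSupport u) : Integrable (fieldForm A φ u) := by
  have hp k : Continuous (pdR φ k) := continuous_pdR hφ k
  have hdA j k : Continuous (pdR (fun y => A y j) k) := continuous_pdR (contDiff_euclidean.1 hA j) k
  have hB j k : Continuous (Bfield A j k) := (hdA j k).sub (hdA k j)
  have hD k : Continuous (magD A k u) := continuous_magD hA.continuous hu k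
  have hu₀ : Continuous u := hu.continuous
  refine Continuous.integrable_of_hasCompactSupport ?_ hcu.mul_right
  unfold fieldForm
  fun_prop

lemma conj_integral_hessianForm (hφ : ContDiff ℝ 2 φ) (u : ℝ^n → ℂ) :
    conj (∫ x, hessianForm A φ u x) = ∫ x, hessianForm A φ u x := by
  simp only [← integral_conj, conj_hessianForm hφ]

lemma sum_l2Pairing_magD_commutator (hA : ContDiff ℝ 1 A) (hφ : ContDiff ℝ 3 φ)
    (hu : ContDiff ℝ 2 u) (hcu : HasCompactSupport u) :
    ∑ k, ⟪magD A k u, fun x => magD A k (Tmul A φ u) x - Tmul A φ (magD A k u) x⟫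
      = 2 * (∫ x, hessianForm A φ u x) - 2 * I * (∫ x, fieldForm A φ u x)
        + ∑ k, ⟪magD A k u, fun x => pdR (lap φ) k x * u x⟫ := by
  have hφ₂ : ContDiff ℝ 2 φ := hφ.of_le (by norm_num)
  have hu₁ : ContDiff ℝ 1 u := hu.of_le one_le_two
  have hDu k : ContDiff ℝ 1 (magD A k u) := contDiff_magD hA hu (by norm_num) k
  have hcDu k : HasCompactSupport (magD A k u) := hasCompactSupport_magD hcu k
  have hT : ContDiff ℝ 1 (Tmul A φ u) := contDiff_Tmul hA hφ (by norm_num) hu (by norm_num)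
  have hcomm k : Continuous fun x => magD A k (Tmul A φ u) x - Tmul A φ (magD A k u) x :=
    (continuous_magD hA.continuous hT k).sub (continuous_Tmul hA.continuous hφ₂ (hDu k))
  have hlap k : Continuous fun x => (pdR (lap φ) k x : ℂ) * u x :=
    continuous_ofReal_mul (continuous_pdR (contDiff_lap hφ (by norm_num)) k) hu.continuous
  have hhessian := (integrable_hessianForm hA.continuous hφ₂ hu₁ hcu).const_mul 2
  have hfield := (integrable_fieldForm hA (hφ.of_le (by norm_num)) hu₁ hcu).const_mul (2 * I)
  have hdiff : Integrable fun x => 2 * hessianForm A φ u x - 2 * I * fieldForm A φ u x :=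
    hhessian.sub hfield
  rw [sum_l2Pairing (fun k _ => (hDu k).continuous) (fun k _ => hcDu k) fun k _ => hcomm k,
    sum_l2Pairing (fun k _ => (hDu k).continuous) (fun k _ => hcDu k) fun k _ => hlap k]
  simp only [sum_conj_magD_mul_commutator hA hφ hu]
  rw [integral_add hdiff (integrable_finsetSum _ fun k _ =>
      integrable_conj_mul (hDu k).continuous (hcDu k) (hlap k)),
    integral_sub hhessian hfield, integral_const_mul, integral_const_mul]

lemma sum_l2Pairing_magD_pdR_lap_add_conj (hA : Continuous A) (hφ : ContDiff ℝ 4 φ)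
    (hu : ContDiff ℝ 1 u) (hcu : HasCompactSupport u) :
    ∑ k, ⟪magD A k u, fun x => pdR (lap φ) k x * u x⟫
        + conj (∑ k, ⟪magD A k u, fun x => pdR (lap φ) k x * u x⟫)
      = -((∫ x, ‖u x‖ ^ 2 * lap (lap φ) x : ℝ) : ℂ) := by
  have hdlap k : ContDiff ℝ 1 (pdR (lap φ) k) :=
    contDiff_pdR (contDiff_lap (m := 2) hφ (by norm_num)) (by norm_num) k
  have hddlap k : Continuous fun x => (pdR (pdR (lap φ) k) k x : ℂ) * u x :=
    continuous_ofReal_mul (continuous_pdR (hdlap k) k) hu.continuous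
  rw [map_sum, ← Finset.sum_add_distrib,
    Finset.sum_congr rfl fun k _ => l2Pairing_magD_ofReal_mul_add_conj hA (hdlap k) hu hcu k,
    Finset.sum_neg_distrib, ← l2Pairing_sum_right hu.continuous hcu fun k _ => hddlap k,
    ← l2Pairing_ofReal_mul_self]
  simp only [lap, ofReal_sum, Finset.sum_mul]

lemma sum_l2Pairing_magD_Tmul_add_conj (hA : ContDiff ℝ 1 A) (hφ : ContDiff ℝ 3 φ)
    (hu : ContDiff ℝ 2 u) (hcu : HasCompactSupport u) :
    ∑ k, ⟪magD A k u, magD A k (Tmul A φ u)⟫ + conj (∑ k, ⟪magD A k u, magD A k (Tmul A φ u)⟫)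
      = ∑ k, ⟪magD A k u, fun x => magD A k (Tmul A φ u) x - Tmul A φ (magD A k u) x⟫
        + conj (∑ k, ⟪magD A k u,
            fun x => magD A k (Tmul A φ u) x - Tmul A φ (magD A k u) x⟫) := by
  have hφ₂ : ContDiff ℝ 2 φ := hφ.of_le (by norm_num)
  have hDu k : ContDiff ℝ 1 (magD A k u) := contDiff_magD hA hu (by norm_num) k
  have hcDu k : HasCompactSupport (magD A k u) := hasCompactSupport_magD hcu k
  have hDT k : Continuous (magD A k (Tmul A φ u)) := continuous_magD hA.continuous
    (contDiff_Tmul hA hφ (by norm_num) hu (by norm_num)) k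
  have hTD k : Continuous (Tmul A φ (magD A k u)) := continuous_Tmul hA.continuous hφ₂ (hDu k)
  simp only [map_sum, ← Finset.sum_add_distrib]
  refine Finset.sum_congr rfl fun k _ => ?_
  rw [l2Pairing_sub_right (hDu k).continuous (hcDu k) (hDT k) (hTD k), map_sub]
  linear_combination l2Pairing_Tmul_self_add_conj hA.continuous hφ₂ (hDu k) (hcDu k)

lemma sum_l2Pairing_magD_commutator_add_conj (hA : ContDiff ℝ 1 A) (hφ : ContDiff ℝ 4 φ)
    (hu : ContDiff ℝ 2 u) (hcu : HasCompactSupport u) :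
    ∑ k, ⟪magD A k u, fun x => magD A k (Tmul A φ u) x - Tmul A φ (magD A k u) x⟫
        + conj (∑ k, ⟪magD A k u, fun x => magD A k (Tmul A φ u) x - Tmul A φ (magD A k u) x⟫)
      = 4 * (∫ x, hessianForm A φ u x) + 4 * ((∫ x, fieldForm A φ u x).im : ℂ)
        - ((∫ x, ‖u x‖ ^ 2 * lap (lap φ) x : ℝ) : ℂ) := by
  have hbilap := sum_l2Pairing_magD_pdR_lap_add_conj hA.continuous hφ (hu.of_le one_le_two) hcu
  have himag : 2 * I * (conj (∫ x, fieldForm A φ u x) - ∫ x, fieldForm A φ u x)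
      = 4 * ((∫ x, fieldForm A φ u x).im : ℂ) := by
    rw [← neg_sub, sub_conj]
    push_cast
    linear_combination -4 * ((∫ x, fieldForm A φ u x).im : ℂ) * I_sq
  rw [sum_l2Pairing_magD_commutator hA (hφ.of_le (by norm_num)) hu hcu]
  simp only [map_add, map_sub, map_mul, conj_I, map_ofNat,
    conj_integral_hessianForm (hφ.of_le (by norm_num))]
  linear_combination hbilap + himag

theorem integral_commutator_identity_general (hA : ContDiff ℝ 2 A) (hV : ContDiff ℝ 1 V)
    (hφ : ContDiff ℝ 4 φ) (hu : ContDiff ℝ 3 u) (hcu : HasCompactSupport u) :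
    ∫ x, conj (u x) * (Hop A V (Tmul A φ u) x - Tmul A φ (Hop A V u) x)
      = 4 * (∫ x, ∑ j, ∑ k, (pdR (pdR φ k) j x : ℂ) * magD A j u x * conj (magD A k u x))
        - ((∫ x, ‖u x‖ ^ 2 * lap (lap φ) x : ℝ) : ℂ)
        - 2 * ((∫ x, ‖u x‖ ^ 2 * ∑ k, pdR φ k x * pdR V k x : ℝ) : ℂ)
        + 4 * (((∫ x, u x * ∑ j, ∑ k, (pdR φ j x : ℂ) * (Bfield A j k x : ℂ)
            * conj (magD A k u x)).im : ℝ) : ℂ) := by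
  have hA₁ : ContDiff ℝ 1 A := hA.of_le one_le_two
  have hu₁ : ContDiff ℝ 1 u := hu.of_le (by norm_num)
  have hu₂ : ContDiff ℝ 2 u := hu.of_le (by norm_num)
  have hT : ContDiff ℝ 2 (Tmul A φ u) := contDiff_Tmul hA hφ (by norm_num) hu (by norm_num)
  have hpotential := l2Pairing_mul_Tmul_add_conj hA.continuous (hφ.of_le (by norm_num)) hV hu₁ hcu
  have hkinetic := (sum_l2Pairing_magD_Tmul_add_conj hA₁ (hφ.of_le (by norm_num)) hu₂ hcu).trans
    (sum_l2Pairing_magD_commutator_add_conj hA₁ hφ hu₂ hcu)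
  have hcommutator := l2Pairing_Hop_commutator_self hA hV hφ hu hcu
  rw [l2Pairing_Hop_right hA₁ hV.continuous hu₁ hcu hT, map_add] at hcommutator
  simp only [l2Pairing, hessianForm, fieldForm] at hcommutator hkinetic hpotential
  linear_combination hcommutator + hkinetic + hpotential

end Virial

/-- Integral commutator identity, the key step of the magnetic virial identity:
`∫ conj u · ([H,T]u) = 4∫ ∇_A u D²φ conj(∇_A u) - ∫ |u|²Δ²φ - 2∫ |u|²∇φ·∇V
  + 4 Im ∫ u ∇φ·B·conj(∇_A u)`. -/
theorem integral_commutator_identity (n : ℕ) (hn : 3 ≤ n)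
    (A : EuclideanSpace ℝ (Fin n) → EuclideanSpace ℝ (Fin n)) (hA : ContDiff ℝ 2 A)
    (V : EuclideanSpace ℝ (Fin n) → ℝ) (hV : ContDiff ℝ 1 V)
    (φ : EuclideanSpace ℝ (Fin n) → ℝ) (hφ : ContDiff ℝ 4 φ)
    (hrad : ∀ x y : EuclideanSpace ℝ (Fin n), ‖x‖ = ‖y‖ → φ x = φ y)
    (u : EuclideanSpace ℝ (Fin n) → ℂ) (hu : ContDiff ℝ (⊤ : ℕ∞) u) (hcs : HasCompactSupport u) :
    ∫ x : EuclideanSpace ℝ (Fin n),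
        (starRingEnd ℂ) (u x) * (Hop A V (Tmul A φ u) x - Tmul A φ (Hop A V u) x)
      = 4 * (∫ x : EuclideanSpace ℝ (Fin n),
              ∑ j, ∑ k, (pdR (pdR φ k) j x : ℂ) * magD A j u x
                * (starRingEnd ℂ) (magD A k u x))
        - ((∫ x : EuclideanSpace ℝ (Fin n), ‖u x‖ ^ 2 * lap (lap φ) x : ℝ) : ℂ)
        - 2 * ((∫ x : EuclideanSpace ℝ (Fin n),
                ‖u x‖ ^ 2 * ∑ k, pdR φ k x * pdR V k x : ℝ) : ℂ)
        + 4 * (((∫ x : EuclideanSpace ℝ (Fin n),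
                u x * ∑ j, ∑ k, (pdR φ j x : ℂ) * (Bfield A j k x : ℂ)
                  * (starRingEnd ℂ) (magD A k u x)).im : ℝ) : ℂ) :=
  integral_commutator_identity_general hA hV hφ (contDiff_infty.1 hu 3) hcs
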